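/- arXiv:2012.05485 — 6 statements merged into one kernel-verified Lean document; each statement's English description precedes it below -/
import Mathlib

section
/- Let ABC be a triangle. Let B' be a point on line AB and C' a point on line AC such that dist(B,B') = dist(C,C') and B' and C' lie strictly on opposite sides of line BC. Let D be a point on the circumcircle of ABC with dist(D,B) = dist(D,C) and such that D and A lie strictly on opposite sides of line BC (so D is the second intersection of the internal bisector of angle A with the circumcircle). Then dist(D,B') = dist(D,C'). -/
open EuclideanGeometry

noncomputable section

/-- The Euclidean plane. -/
abbrev Pt := EuclideanSpace ℝ (Fin 2)

/-- The pedal (orthogonal projection) of `P` on the line `XY` (the affine span of `{X, Y}`). -/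
def pedal (P X Y : Pt) : Pt :=
  EuclideanGeometry.orthogonalProjection (affineSpan ℝ {X, Y}) P

/-- The reflection of `P` in the line `XY` (the affine span of `{X, Y}`). -/
def lineReflect (X Y P : Pt) : Pt :=
  EuclideanGeometry.reflection (affineSpan ℝ {X, Y}) P

/-- The circumcenter of the triangle `ABC`. -/
def circumcenter3 (A B C : Pt) (h : AffineIndependent ℝ ![A, B, C]) : Pt :=
  (⟨![A, B, C], h⟩ : Affine.Triangle ℝ Pt).circumcenter

/-- The circumradius of the triangle `ABC`. -/
def circumradius3 (A B C : Pt) (h : AffineIndependent ℝ ![A, B, C]) : ℝ :=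
  (⟨![A, B, C], h⟩ : Affine.Triangle ℝ Pt).circumradius

/-- The orthocenter of the triangle `ABC`. -/
def orthocenter3 (A B C : Pt) (h : AffineIndependent ℝ ![A, B, C]) : Pt :=
  Affine.Triangle.orthocenter (⟨![A, B, C], h⟩ : Affine.Triangle ℝ Pt)

/-- The incenter of the triangle `ABC`: `(a•A + b•B + c•C)/(a+b+c)` with
`a = dist B C`, `b = dist C A`, `c = dist A B`. -/
def incenter3 (A B C : Pt) : Pt :=
  (dist B C + dist C A + dist A B)⁻¹ •
    (dist B C • A + dist C A • B + dist A B • C)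

/-- The centroid of the triangle `ABC`. -/
def centroid3 (A B C : Pt) : Pt := (3 : ℝ)⁻¹ • (A + B + C)

/-- The Nagel point of the triangle `ABC`:
`((s−a)/s)•A + ((s−b)/s)•B + ((s−c)/s)•C` with `s` the semiperimeter. -/
def nagelPoint (A B C : Pt) : Pt :=
  (((dist B C + dist C A + dist A B) / 2 - dist B C) /
      ((dist B C + dist C A + dist A B) / 2)) • A +
    (((dist B C + dist C A + dist A B) / 2 - dist C A) /
      ((dist B C + dist C A + dist A B) / 2)) • B +
    (((dist B C + dist C A + dist A B) / 2 - dist A B) /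
      ((dist B C + dist C A + dist A B) / 2)) • C

theorem aux_real (u v : ℝ) (h : u^2 + v^2 = 0) : u = 0 ∧ v = 0 := by
  constructor
  · have : u^2 = 0 := by linarith [sq_nonneg u, sq_nonneg v]
    exact pow_eq_zero_iff (two_ne_zero) |>.1 this
  · have : v^2 = 0 := by linarith [sq_nonneg u, sq_nonneg v]
    exact pow_eq_zero_iff (two_ne_zero) |>.1 this

theorem aux_ne (B C : Pt) (h : B ≠ C) :
    ((C 0 - B 0)/2)^2 + ((C 1 - B 1)/2)^2 ≠ 0 := by
  intro h0
  obtain ⟨h1, h2⟩ := aux_real _ _ h0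
  apply h
  ext i
  fin_cases i
  · show B 0 = C 0
    linarith
  · show B 1 = C 1
    linarith

theorem aux_decomp (B C X : Pt) (h : B ≠ C) : ∃ p q : ℝ,
    X 0 = (B 0 + C 0)/2 + p * ((C 0 - B 0)/2) - q * ((C 1 - B 1)/2) ∧
    X 1 = (B 1 + C 1)/2 + p * ((C 1 - B 1)/2) + q * ((C 0 - B 0)/2) := by
  have hn := aux_ne B C h
  generalize hu : (C 0 - B 0)/2 = u at *
  generalize hv : (C 1 - B 1)/2 = v at *
  generalize (B 0 + C 0)/2 = m
  generalize (B 1 + C 1)/2 = k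
  refine ⟨((X 0 - m) * u + (X 1 - k) * v)/(u^2+v^2),
    ((X 1 - k) * u - (X 0 - m) * v)/(u^2+v^2), ?_, ?_⟩ <;> field_simp <;> ring

theorem aux_mem_line (B C X : Pt) (h : X ∈ affineSpan ℝ ({B, C} : Set Pt)) :
    ∃ r : ℝ, X 0 = B 0 + r * (C 0 - B 0) ∧ X 1 = B 1 + r * (C 1 - B 1) := by
  obtain ⟨r, rfl⟩ := (mem_affineSpan_pair_iff_exists_lineMap_eq).1 h
  refine ⟨r, ?_, ?_⟩ <;> simp [AffineMap.lineMap_apply] <;> ring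

theorem aux_notMem (B C X : Pt) (p q : ℝ)
    (h0 : X 0 = (B 0 + C 0)/2 + p * ((C 0 - B 0)/2) - q * ((C 1 - B 1)/2))
    (h1 : X 1 = (B 1 + C 1)/2 + p * ((C 1 - B 1)/2) + q * ((C 0 - B 0)/2))
    (h : X ∉ affineSpan ℝ ({B, C} : Set Pt)) : q ≠ 0 := by
  rintro rfl
  apply h
  rw [mem_affineSpan_pair_iff_exists_lineMap_eq]
  refine ⟨(1+p)/2, ?_⟩
  ext i
  fin_cases i
  · simp [AffineMap.lineMap_apply, h0]; ring
  · simp [AffineMap.lineMap_apply, h1]; ring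

theorem aux_opp (B C X Y : Pt) (hBC : B ≠ C) (p q p' q' : ℝ)
    (h0 : X 0 = (B 0 + C 0)/2 + p * ((C 0 - B 0)/2) - q * ((C 1 - B 1)/2))
    (h1 : X 1 = (B 1 + C 1)/2 + p * ((C 1 - B 1)/2) + q * ((C 0 - B 0)/2))
    (k0 : Y 0 = (B 0 + C 0)/2 + p' * ((C 0 - B 0)/2) - q' * ((C 1 - B 1)/2))
    (k1 : Y 1 = (B 1 + C 1)/2 + p' * ((C 1 - B 1)/2) + q' * ((C 0 - B 0)/2))
    (h : (affineSpan ℝ ({B, C} : Set Pt)).SOppSide X Y) : q * q' < 0 := by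
  obtain ⟨⟨P, hP, Q, hQ, hs⟩, hX, hY⟩ := h
  have hq := aux_notMem B C X p q h0 h1 hX
  have hq' := aux_notMem B C Y p' q' k0 k1 hY
  rcases hs with hs | hs | ⟨r, r', hr, hr', hs⟩
  · rw [vsub_eq_zero_iff_eq] at hs
    exact absurd (hs ▸ hP) hX
  · rw [vsub_eq_zero_iff_eq] at hs
    exact absurd (hs ▸ hQ) hY
  · obtain ⟨a, a0, a1⟩ := aux_mem_line B C P hP
    obtain ⟨b, b0, b1⟩ := aux_mem_line B C Q hQ
    have e0 := congrArg (fun v : Pt => v 0) hs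
    have e1 := congrArg (fun v : Pt => v 1) hs
    simp at e0 e1
    rw [h0, k0, a0, b0] at e0
    rw [h1, k1, a1, b1] at e1
    have hn := aux_ne B C hBC
    have e : r * q = - (r' * q') := by
      apply mul_left_cancel₀ hn
      linear_combination (C 0 - B 0)/2 * e1 - (C 1 - B 1)/2 * e0
    have : r * (q * q') = - (r' * q'^2) := by linear_combination q' * e
    have h2 : 0 < r' * q'^2 := by positivity
    by_contra hc
    push Not at hc
    nlinarith [mul_nonneg hr.le hc]

theorem aux_dist (X Y : Pt) : dist X Y ^ 2 = (X 0 - Y 0)^2 + (X 1 - Y 1)^2 := by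
  rw [EuclideanSpace.dist_eq, Real.sq_sqrt (by positivity)]
  simp [Fin.sum_univ_two, Real.dist_eq]

/-- The normalised computation: `B = (-1,0)`, `C = (1,0)`, `D = (0,d)`, `A = (p,q)`. -/
theorem aux_core (p q d t s : ℝ) (hdq : d * q < 0)
    (hc : q * (d^2 - 1) = d * (p^2 + q^2 - 1))
    (hts : t * s < 0)
    (hl : t^2 * ((p+1)^2 + q^2) = s^2 * ((p-1)^2 + q^2)) :
    t * (1 + p + d * q) = s * (1 - p + d * q) := by
  have hd : d ≠ 0 := by rintro rfl; simp at hdq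
  have hd2 : 0 < d^2 := by positivity
  have hq : q ≠ 0 := by rintro rfl; simp at hdq
  have h1 : d^2 * p^2 = (1 + d*q) * (d^2 - d*q) := by linear_combination -d * hc
  have h2 : 0 ≤ 1 + d * q := by
    by_contra hh
    push Not at hh
    nlinarith [mul_nonneg hd2.le (sq_nonneg p), mul_pos (neg_pos.2 hh) (show 0 < d^2 - d*q by linarith)]
  have h3 : d^2 * ((1 + p + d*q) * (1 - p + d*q)) = (d*q) * ((d^2+1) * (1+d*q)) := by
    linear_combination -h1
  have h4 : (1 + p + d*q) * (1 - p + d*q) ≤ 0 := by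
    by_contra hh
    push Not at hh
    nlinarith [mul_pos hd2 hh, mul_nonneg (neg_pos.2 hdq).le (mul_nonneg (show 0 ≤ d^2+1 by positivity) h2)]
  have hb : 0 < (p-1)^2 + q^2 := by positivity
  have hcc : 0 < (p+1)^2 + q^2 := by positivity
  have h5 : ((p-1)^2+q^2) * (1 + p + d*q)^2 = ((p+1)^2+q^2) * (1 - p + d*q)^2 := by
    linear_combination -4 * p * q * hc
  set X := 1 + p + d*q
  set Y := 1 - p + d*q
  have h6 : (t * X)^2 = (s * Y)^2 := by
    apply mul_left_cancel₀ (mul_pos hb hcc).ne'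
    linear_combination ((p-1)^2 + q^2) * X^2 * hl + s^2 * ((p-1)^2+q^2) * h5
  have h7 : 0 ≤ (t * X) * (s * Y) := by nlinarith [mul_nonneg (neg_pos.2 hts).le (neg_nonneg.2 h4)]
  rcases sq_eq_sq_iff_eq_or_eq_neg.1 h6 with h | h
  · exact h
  · have : s * Y = 0 := by
      rw [h] at h7
      nlinarith [sq_nonneg (s*Y)]
    rw [h, this]; simp

theorem stmt0 (A B C B' C' D : Pt)
    (hABC : AffineIndependent ℝ ![A, B, C])
    (hB' : B' ∈ affineSpan ℝ ({A, B} : Set Pt))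
    (hC' : C' ∈ affineSpan ℝ ({A, C} : Set Pt))
    (hdist : dist B B' = dist C C')
    (hopp : (affineSpan ℝ ({B, C} : Set Pt)).SOppSide B' C')
    (hDcirc : dist D (circumcenter3 A B C hABC) = circumradius3 A B C hABC)
    (hDBC : dist D B = dist D C)
    (hDopp : (affineSpan ℝ ({B, C} : Set Pt)).SOppSide D A) :
    dist D B' = dist D C' := by
  have hBC : B ≠ C := by
    intro h
    have := hABC.injective.ne (show (1 : Fin 3) ≠ 2 by decide)
    exact this (by simpa using h)
  have hOA : dist A (circumcenter3 A B C hABC) = circumradius3 A B C hABC :=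
    (⟨![A, B, C], hABC⟩ : Affine.Triangle ℝ Pt).dist_circumcenter_eq_circumradius 0
  have hOB : dist B (circumcenter3 A B C hABC) = circumradius3 A B C hABC :=
    (⟨![A, B, C], hABC⟩ : Affine.Triangle ℝ Pt).dist_circumcenter_eq_circumradius 1
  have hOC : dist C (circumcenter3 A B C hABC) = circumradius3 A B C hABC :=
    (⟨![A, B, C], hABC⟩ : Affine.Triangle ℝ Pt).dist_circumcenter_eq_circumradius 2
  generalize circumcenter3 A B C hABC = O at *
  generalize circumradius3 A B C hABC = R at *
  obtain ⟨p, q, A0, A1⟩ := aux_decomp B C A hBC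
  obtain ⟨w, d, D0, D1⟩ := aux_decomp B C D hBC
  obtain ⟨a, e, O0, O1⟩ := aux_decomp B C O hBC
  obtain ⟨t, T0, T1⟩ := aux_mem_line B A B' (by rwa [Set.pair_comm])
  obtain ⟨s, S0, S1⟩ := aux_mem_line C A C' (by rwa [Set.pair_comm])
  have hdq := aux_opp B C D A hBC w d p q D0 D1 A0 A1 hDopp
  have hts := aux_opp B C B' C' hBC (-1 + t*(p+1)) (t*q) (1 + s*(p-1)) (s*q)
    (by rw [T0, A0]; ring) (by rw [T1, A1]; ring) (by rw [S0, A0]; ring)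
    (by rw [S1, A1]; ring) hopp
  have hn := aux_ne B C hBC
  have gA : dist A O ^ 2 = dist B O ^ 2 := by rw [hOA, hOB]
  have gC : dist C O ^ 2 = dist B O ^ 2 := by rw [hOC, hOB]
  have gD : dist D O ^ 2 = dist B O ^ 2 := by rw [hDcirc, hOB]
  have gw : dist D B ^ 2 = dist D C ^ 2 := by rw [hDBC]
  have gl : dist B B' ^ 2 = dist C C' ^ 2 := by rw [hdist]
  rw [aux_dist, aux_dist] at gA gC gD gw gl
  rw [← sq_eq_sq₀ dist_nonneg dist_nonneg, aux_dist, aux_dist]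
  clear hOA hOB hOC hDcirc hDBC hdist hopp hDopp hB' hC' hABC
  simp only [T0, T1, S0, S1, A0, A1, D0, D1, O0, O1] at gA gC gD gw gl ⊢
  clear T0 T1 S0 S1 A0 A1 D0 D1 O0 O1
  have hw : w = 0 := by
    apply mul_left_cancel₀ hn; linear_combination gw / 4
  have ha : a = 0 := by
    apply mul_left_cancel₀ hn; linear_combination -gC / 4
  subst hw ha
  have iA : p^2 + q^2 - 1 = 2 * e * q := by
    apply mul_left_cancel₀ hn; linear_combination gA
  have iD : d^2 - 1 = 2 * e * d := by
    apply mul_left_cancel₀ hn; linear_combination gD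
  have hl : t^2 * ((p+1)^2 + q^2) = s^2 * ((p-1)^2 + q^2) := by
    apply mul_left_cancel₀ hn; linear_combination gl
  have hts' : t * s < 0 := by
    by_contra hh
    push Not at hh
    have h8 := mul_nonneg hh (sq_nonneg q)
    have h9 : t * q * (s * q) = t * s * q^2 := by ring
    linarith only [h8, h9, hts]
  have key := aux_core p q d t s hdq (by linear_combination q * iD - d * iA) hts' hl
  linear_combination (((C 0 - B 0)/2)^2 + ((C 1 - B 1)/2)^2) * (hl - 2 * key)

end
end

section
/- Let ABC be a triangle with incenter I and let P be any point. Let A_P be the pedal of P on line BC, and let A', B', C' be the pedals of P on lines AI, BI, CI; assume A', B', C' are affinely independent with orthocenter H'. Let H_A' be the reflection of H' in line B'C'. Then P, A_P and H_A' are collinear. -/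
open EuclideanGeometry

noncomputable section

lemma inner2 (x y : Pt) : inner ℝ x y = x 0 * y 0 + x 1 * y 1 := by
  simp [PiLp.inner_apply, Fin.sum_univ_two, mul_comm]

lemma ext2 {x y : Pt} (h0 : x 0 = y 0) (h1 : x 1 = y 1) : x = y := by
  ext i; fin_cases i
  · exact h0
  · exact h1

lemma exists_smul_of_det {x d : Pt} (hd : d ≠ 0) (h : x 0 * d 1 - x 1 * d 0 = 0) :
    ∃ t : ℝ, x = t • d := by
  by_cases h0 : d 0 = 0
  · have h1 : d 1 ≠ 0 := fun h1 => hd (ext2 (by simpa using h0) (by simpa using h1))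
    refine ⟨x 1 / d 1, ext2 ?_ ?_⟩
    · have : x 0 * d 1 = 0 := by rw [h0] at h; linarith
      have := (mul_eq_zero.1 this).resolve_right h1
      simp [h0, this]
    · simp; field_simp
  · refine ⟨x 0 / d 0, ext2 ?_ ?_⟩
    · simp; field_simp
    · simp; field_simp; linarith

lemma pedal_eq {P X Y Q : Pt} (hne : X ≠ Y)
    (h1 : (Q 0 - X 0) * (Y 1 - X 1) - (Q 1 - X 1) * (Y 0 - X 0) = 0)
    (h2 : (P 0 - Q 0) * (Y 0 - X 0) + (P 1 - Q 1) * (Y 1 - X 1) = 0) :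
    (EuclideanGeometry.orthogonalProjection (affineSpan ℝ {X, Y}) P : Pt) = Q := by
  rw [coe_orthogonalProjection_eq_iff_mem]
  constructor
  · obtain ⟨t, ht⟩ := exists_smul_of_det (x := Q - X) (d := Y - X)
      (sub_ne_zero.2 hne.symm) (by simpa using h1)
    have : Q = AffineMap.lineMap X Y t := by
      rw [AffineMap.lineMap_apply, vsub_eq_sub, vadd_eq_add, ← ht]; simp
    rw [this]
    exact AffineMap.lineMap_mem_affineSpan_pair t X Y
  · rw [direction_affineSpan, vectorSpan_pair_rev, Submodule.mem_orthogonal_singleton_iff_inner_left,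
      inner2]
    simpa using h2

lemma pedal_perp (P X Y : Pt) : (pedal P X Y 0 - P 0) * (Y 0 - X 0)
    + (pedal P X Y 1 - P 1) * (Y 1 - X 1) = 0 := by
  have h := (coe_orthogonalProjection_eq_iff_mem (s := affineSpan ℝ {X, Y}) (p := P)
    (q := pedal P X Y)).1 rfl
  have h2 := h.2
  rw [direction_affineSpan, vectorSpan_pair_rev, Submodule.mem_orthogonal_singleton_iff_inner_left,
      inner2] at h2
  simp at h2
  linarith

lemma reflect_eq {P X Y Q : Pt} (hne : X ≠ Y)
    (h1 : ((P 0 + Q 0) / 2 - X 0) * (Y 1 - X 1) - ((P 1 + Q 1) / 2 - X 1) * (Y 0 - X 0) = 0)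
    (h2 : (P 0 - Q 0) * (Y 0 - X 0) + (P 1 - Q 1) * (Y 1 - X 1) = 0) :
    lineReflect X Y P = Q := by
  have h := pedal_eq (P := P) (X := X) (Y := Y) (Q := (1/2 : ℝ) • (P + Q)) hne
    (by simp; linear_combination h1) (by simp; linear_combination h2 / 2)
  rw [lineReflect, reflection_apply', h]
  apply ext2 <;> simp <;> ring

/-- the point `I + (q + e f q̄)/2`, `q = P - I` -/
def foot (I P : Pt) (e f : Pt) : Pt :=
  !₂[I 0 + ((P 0 - I 0) + ((e 0 * f 0 - e 1 * f 1) * (P 0 - I 0)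
        + (e 0 * f 1 + e 1 * f 0) * (P 1 - I 1))) / 2,
     I 1 + ((P 1 - I 1) + ((e 0 * f 1 + e 1 * f 0) * (P 0 - I 0)
        - (e 0 * f 0 - e 1 * f 1) * (P 1 - I 1))) / 2]

lemma pedal_foot {A I P e f : Pt} {k : ℝ} (hk : k ≠ 0) (hA : I - A = k • (e + f))
    (hef : e + f ≠ 0) (he : e 0 ^ 2 + e 1 ^ 2 = 1) (hf : f 0 ^ 2 + f 1 ^ 2 = 1) :
    pedal P A I = foot I P e f := by
  have h0 : I 0 - A 0 = k * (e 0 + f 0) := by simpa [mul_add] using congrArg (fun x : Pt => x 0) hA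
  have h1 : I 1 - A 1 = k * (e 1 + f 1) := by simpa [mul_add] using congrArg (fun x : Pt => x 1) hA
  have hA0 : A 0 = I 0 - k * (e 0 + f 0) := by linarith
  have hA1 : A 1 = I 1 - k * (e 1 + f 1) := by linarith
  refine pedal_eq ?_ ?_ ?_
  · rintro rfl
    rw [sub_self] at hA
    exact (smul_ne_zero hk hef) hA.symm
  · rw [h0, h1, hA0, hA1]
    simp [foot]
    linear_combination -k / 2 * (f 1 * (P 0 - I 0) - f 0 * (P 1 - I 1)) * he
      - k / 2 * (e 1 * (P 0 - I 0) - e 0 * (P 1 - I 1)) * hf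
  · rw [h0, h1]
    simp [foot]
    linear_combination -k / 2 * (f 0 * (P 0 - I 0) + f 1 * (P 1 - I 1)) * he
      - k / 2 * (e 0 * (P 0 - I 0) + e 1 * (P 1 - I 1)) * hf

lemma dist_sq2 (x y : Pt) : dist x y ^ 2 = (x 0 - y 0) ^ 2 + (x 1 - y 1) ^ 2 := by
  rw [EuclideanSpace.dist_eq, Real.sq_sqrt (by positivity)]
  simp [Fin.sum_univ_two, Real.dist_eq]

lemma orthocenter_eq {A B C O : Pt} (h : AffineIndependent ℝ ![A, B, C]) {r : ℝ}
    (hA : dist A O = r) (hB : dist B O = r) (hC : dist C O = r) :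
    orthocenter3 A B C h = A + B + C - (2 : ℝ) • O := by
  let t : Affine.Triangle ℝ Pt := ⟨![A, B, C], h⟩
  have htop : affineSpan ℝ (Set.range t.points) = ⊤ := by
    rw [t.independent.affineSpan_eq_top_iff_card_eq_finrank_add_one]
    simp
  have hO : O = t.circumcenter := by
    refine t.eq_circumcenter_of_dist_eq (r := r) (by rw [htop]; trivial) ?_
    intro i
    fin_cases i
    · exact hA
    · exact hB
    · exact hC
  have h3 := Affine.Triangle.orthocenter_vsub_circumcenter_eq_sum_vsub t
  rw [← hO, Fin.sum_univ_three] at h3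
  change orthocenter3 A B C h - O = (A - O) + (B - O) + (C - O) at h3
  rw [sub_eq_iff_eq_add] at h3
  rw [h3, two_smul]; abel

lemma dist_foot (I P e f : Pt) (he : e 0 ^ 2 + e 1 ^ 2 = 1) (hf : f 0 ^ 2 + f 1 ^ 2 = 1) :
    dist (foot I P e f) ((1/2 : ℝ) • (I + P)) = dist P I / 2 := by
  rw [← sq_eq_sq₀ dist_nonneg (by positivity), div_pow, dist_sq2, dist_sq2]
  simp [foot]
  obtain ⟨q0, hq0⟩ : ∃ q0, P 0 = I 0 + q0 := ⟨P 0 - I 0, by ring⟩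
  obtain ⟨q1, hq1⟩ : ∃ q1, P 1 = I 1 + q1 := ⟨P 1 - I 1, by ring⟩
  rw [hq0, hq1]
  have h : (e 0 ^ 2 + e 1 ^ 2) * (f 0 ^ 2 + f 1 ^ 2) = 1 := by rw [he, hf]; norm_num
  linear_combination (q0 ^ 2 + q1 ^ 2) / 4 * h

lemma reflect_foot {I P e f g H : Pt} (he : e 0 ^ 2 + e 1 ^ 2 = 1) (hf : f 0 ^ 2 + f 1 ^ 2 = 1)
    (hg : g 0 ^ 2 + g 1 ^ 2 = 1) (hne : foot I P g (-e) ≠ foot I P (-g) (-f))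
    (hH : H = foot I P e f + foot I P g (-e) + foot I P (-g) (-f)
      - (2 : ℝ) • ((1/2 : ℝ) • (I + P))) :
    lineReflect (foot I P g (-e)) (foot I P (-g) (-f)) H = foot I P g g := by
  obtain ⟨q0, hq0⟩ : ∃ q0, P 0 = I 0 + q0 := ⟨P 0 - I 0, by ring⟩
  obtain ⟨q1, hq1⟩ : ∃ q1, P 1 = I 1 + q1 := ⟨P 1 - I 1, by ring⟩
  apply reflect_eq hne
  · rw [hH]; simp [foot, hq0, hq1]
    linear_combination -(q0 ^ 2 + q1 ^ 2) / 8 * ((g 1 * e 0 - g 0 * e 1) * (hg - hf)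
      + (g 1 * f 0 - g 0 * f 1) * (hg - he))
  · rw [hH]; simp [foot, hq0, hq1]
    linear_combination (q0 ^ 2 + q1 ^ 2) / 4 * ((f 0 * g 0 + f 1 * g 1) * (he - hg)
      + (e 0 * g 0 + e 1 * g 1) * (hf - hg) + (g 0 ^ 2 + g 1 ^ 2) * (hf - he))

lemma exists_unit {X Y : Pt} (h : X ≠ Y) :
    ∃ e : Pt, e 0 ^ 2 + e 1 ^ 2 = 1 ∧ Y - X = dist X Y • e := by
  have hd : dist X Y ≠ 0 := dist_ne_zero.2 h
  refine ⟨(dist X Y)⁻¹ • (Y - X), ?_, ?_⟩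
  · have := dist_sq2 X Y
    simp
    field_simp
    rw [this]; ring
  · rw [smul_smul, mul_inv_cancel₀ hd, one_smul]

lemma perp_collinear {P Q R : Pt} {d : Pt} (hd : d ≠ 0)
    (h1 : (Q 0 - P 0) * d 0 + (Q 1 - P 1) * d 1 = 0)
    (h2 : (R 0 - P 0) * d 0 + (R 1 - P 1) * d 1 = 0) : Collinear ℝ ({P, Q, R} : Set Pt) := by
  have hd' : (!₂[-d 1, d 0] : Pt) ≠ 0 := by
    intro h
    apply hd
    have h0 := congrArg (fun x : Pt => x 0) h
    have h1 := congrArg (fun x : Pt => x 1) h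
    simp at h0 h1
    exact ext2 (by simpa using h1) (by simpa using h0)
  rw [collinear_iff_of_mem (p₀ := P) (by simp)]
  refine ⟨!₂[-d 1, d 0], ?_⟩
  obtain ⟨s, hs⟩ := exists_smul_of_det (x := Q - P) hd' (by simp; linarith)
  obtain ⟨t, ht⟩ := exists_smul_of_det (x := R - P) hd' (by simp; linarith)
  intro p hp
  rcases hp with rfl | rfl | rfl
  · exact ⟨0, by simp⟩
  · exact ⟨s, by rw [← hs]; simp⟩
  · exact ⟨t, by rw [← ht]; simp⟩

lemma add_ne_of_indep {A B C e f : Pt} {b c : ℝ} (h : ¬ Collinear ℝ ({A, B, C} : Set Pt))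
    (hB : B - A = c • e) (hC : C - A = b • f) : e + f ≠ 0 := by
  intro h0
  apply h
  rw [collinear_iff_of_mem (p₀ := A) (by simp)]
  have hf : f = -e := (neg_eq_of_add_eq_zero_right h0).symm
  refine ⟨e, ?_⟩
  intro p hp
  rcases hp with rfl | rfl | rfl
  · exact ⟨0, by simp⟩
  · exact ⟨c, by rw [← hB]; simp⟩
  · exact ⟨-b, by rw [hf] at hC; rw [neg_smul, ← smul_neg, ← hC]; simp⟩

theorem stmt6 (A B C I P AP A' B' C' H' HA' : Pt)
    (hABC : AffineIndependent ℝ ![A, B, C])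
    (hI : I = incenter3 A B C)
    (hAP : AP = pedal P B C)
    (hA' : A' = pedal P A I) (hB' : B' = pedal P B I) (hC' : C' = pedal P C I)
    (hA'B'C' : AffineIndependent ℝ ![A', B', C'])
    (hH' : H' = orthocenter3 A' B' C' hA'B'C')
    (hHA' : HA' = lineReflect B' C' H') :
    Collinear ℝ ({P, AP, HA'} : Set Pt) := by
  have hcol := affineIndependent_iff_not_collinear_set.1 hABC
  have hAB : A ≠ B := hABC.injective.ne (show (0 : Fin 3) ≠ 1 by decide)
  have hAC : A ≠ C := hABC.injective.ne (show (0 : Fin 3) ≠ 2 by decide)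
  have hBC : B ≠ C := hABC.injective.ne (show (1 : Fin 3) ≠ 2 by decide)
  have hBC' : B' ≠ C' := hA'B'C'.injective.ne (show (1 : Fin 3) ≠ 2 by decide)
  obtain ⟨e, he, hce⟩ := exists_unit hAB
  obtain ⟨f, hf, hbf⟩ := exists_unit hAC
  obtain ⟨g, hg, hag⟩ := exists_unit hBC
  have ha := dist_pos.2 hBC
  have hb := dist_pos.2 hAC
  have hc := dist_pos.2 hAB
  rw [incenter3, dist_comm C A] at hI
  generalize dist B C = a at *
  generalize dist A C = b at *
  generalize dist A B = c at *
  have hs : a + b + c ≠ 0 := by positivity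
  have hB : B = A + c • e := by rw [← hce]; simp
  have hC : C = A + b • f := by rw [← hbf]; simp
  have hneg : ∀ x : Pt, x 0 ^ 2 + x 1 ^ 2 = 1 → (-x) 0 ^ 2 + (-x) 1 ^ 2 = 1 := by
    intro x hx; simpa using hx
  have hBA : A - B = c • (-e) := by rw [hB]; simp
  have hCA : A - C = b • (-f) := by rw [hC]; simp
  have hCB : B - C = a • (-g) := by rw [smul_neg, ← hag]; simp
  have comm1 : ({B, C, A} : Set Pt) = {A, B, C} := by ext; simp; tauto
  have comm2 : ({C, B, A} : Set Pt) = {A, B, C} := by ext; simp; tauto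
  have e1 : e + f ≠ 0 := add_ne_of_indep hcol hce hbf
  have e2 : g + -e ≠ 0 := add_ne_of_indep (by rwa [comm1]) hag hBA
  have e3 : -g + -f ≠ 0 := add_ne_of_indep (by rwa [comm2]) hCB hCA
  have key : ∀ X : Pt, I - X = (a + b + c)⁻¹ • (a • (A - X) + b • (B - X) + c • (C - X)) := by
    intro X
    rw [hI]
    have : X = (a + b + c)⁻¹ • ((a + b + c) • X) := by
      rw [smul_smul, inv_mul_cancel₀ hs, one_smul]
    conv_lhs => rw [this]
    rw [← smul_sub]
    congr 1
    module
  have hA2 : A' = foot I P e f := by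
    rw [hA']
    refine pedal_foot (k := (a + b + c)⁻¹ * (b * c)) (by positivity) ?_ e1 he hf
    rw [key, hce, hbf]; module
  have hB2 : B' = foot I P g (-e) := by
    rw [hB']
    refine pedal_foot (k := (a + b + c)⁻¹ * (a * c)) (by positivity) ?_ e2 hg (hneg e he)
    rw [key, hag, hBA]; module
  have hC2 : C' = foot I P (-g) (-f) := by
    rw [hC']
    refine pedal_foot (k := (a + b + c)⁻¹ * (a * b)) (by positivity) ?_ e3 (hneg g hg) (hneg f hf)
    rw [key, hCB, hCA]; module
  have hH2 : H' = A' + B' + C' - (2 : ℝ) • ((1/2 : ℝ) • (I + P)) := by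
    rw [hH']
    refine orthocenter_eq hA'B'C' (r := dist P I / 2) ?_ ?_ ?_
    · rw [hA2]; exact dist_foot I P e f he hf
    · rw [hB2]; exact dist_foot I P _ _ hg (hneg e he)
    · rw [hC2]; exact dist_foot I P _ _ (hneg g hg) (hneg f hf)
  rw [hB2, hC2] at hBC'
  rw [hA2, hB2, hC2] at hH2
  have hHA2 : HA' = foot I P g g := by
    rw [hHA', hB2, hC2]
    exact reflect_foot he hf hg hBC' hH2
  have hg0 : C 0 - B 0 = a * g 0 := by simpa using congrArg (fun x : Pt => x 0) hag
  have hg1 : C 1 - B 1 = a * g 1 := by simpa using congrArg (fun x : Pt => x 1) hag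
  refine perp_collinear (d := C - B) (sub_ne_zero.2 hBC.symm) ?_ ?_
  · rw [hAP]; simpa using pedal_perp P B C
  · rw [hHA2]
    obtain ⟨q0, hq0⟩ : ∃ q0, P 0 = I 0 + q0 := ⟨P 0 - I 0, by ring⟩
    obtain ⟨q1, hq1⟩ : ∃ q1, P 1 = I 1 + q1 := ⟨P 1 - I 1, by ring⟩
    simp only [PiLp.sub_apply, hg0, hg1]
    simp [foot, hq0, hq1]
    linear_combination a / 2 * (q0 * g 0 + q1 * g 1) * hg


end
end

section
/- Let ABC be a triangle with circumcenter O and orthocenter H, and assume H ∉ {A, B, C}. Let A*, B*, C* be the pedals of O on lines AH, BH, CH, and assume A*, B*, C* are affinely independent with circumcenter N* and orthocenter H*. Then each of the reflections of O in the lines B*C*, C*A*, A*B* is collinear with N* and H*; that is, the Steiner line of O with respect to triangle A*B*C* is the Euler line of A*B*C*. -/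
open EuclideanGeometry

noncomputable section

theorem uniq2 (d1 d2 w1 w2 : ℝ) (hw : ¬ (w1 = 0 ∧ w2 = 0)) (h1 : d1*w1+d2*w2=0)
    (h2 : d1*w2-d2*w1=0) : d1 = 0 ∧ d2 = 0 := by
  have hp : w1^2+w2^2 ≠ 0 := by
    intro h; apply hw; constructor <;> nlinarith [sq_nonneg w1, sq_nonneg w2]
  constructor
  · apply mul_left_cancel₀ hp; linear_combination w1*h1+w2*h2
  · apply mul_left_cancel₀ hp; linear_combination w2*h1-w1*h2

theorem ped (a1 a2 b1 b2 c1 c2 r s1 s2 : ℝ) (ha : a1^2+a2^2=r) (hb : b1^2+b2^2=r)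
    (hc : c1^2+c2^2=r) (hw : ¬ (b1+c1=0 ∧ b2+c2=0))
    (h1 : s1*(b1+c1)+s2*(b2+c2)=0) (h2 : (s1-a1)*(b2+c2)-(s2-a2)*(b1+c1)=0) :
    2*r*s1 = r*a1 - (a1*(b1*c1-b2*c2)+a2*(b1*c2+b2*c1)) ∧
    2*r*s2 = r*a2 - (a1*(b1*c2+b2*c1)-a2*(b1*c1-b2*c2)) := by
  have := uniq2 (2*r*s1 - (r*a1 - (a1*(b1*c1-b2*c2)+a2*(b1*c2+b2*c1))))
    (2*r*s2 - (r*a2 - (a1*(b1*c2+b2*c1)-a2*(b1*c1-b2*c2)))) (b1+c1) (b2+c2) hw (by grind) (by grind)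
  constructor <;> linarith [this.1, this.2]



set_option maxRecDepth 100000 in
set_option maxHeartbeats 4000000 in
theorem polyS (a1 a2 b1 b2 c1 c2 r h1 h2 S1 S2 w1 w2 : ℝ) (ha : a1^2+a2^2=r) (hb : b1^2+b2^2=r)
    (hc : c1^2+c2^2=r)
    (e1 : h1 = a1+b1+c1) (e2 : h2 = a2+b2+c2)
    (hS1 : S1 = b1*c1-b2*c2 + (c1*a1-c2*a2) + (a1*b1-a2*b2))
    (hS2 : S2 = b1*c2+b2*c1 + (c1*a2+c2*a1) + (a1*b2+a2*b1))
    (hw1 : w1 = a1*(b1-c1)-a2*(b2-c2)) (hw2 : w2 = a1*(b2-c2)+a2*(b1-c1)) :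
    (r*(h1^2-h2^2) - (2*(b1*c1+b2*c2)+r)*S1)*w1 +
    (r*(2*h1*h2) - (2*(b1*c1+b2*c2)+r)*S2)*w2 = 0 ∧
    (-(2*(b1*c1+b2*c2)+r)*S1 - r*(h1^2-h2^2) + 2*(h1^2+h2^2)*(c1*a1-c2*a2))*w2 -
    (-(2*(b1*c1+b2*c2)+r)*S2 - r*(2*h1*h2) + 2*(h1^2+h2^2)*(c1*a2+c2*a1))*w1 = 0 := by
  subst hS1 hS2 hw1 hw2 e1 e2
  constructor <;> grind
theorem poly (a1 a2 b1 b2 c1 c2 r h1 h2 X1 X2 Y1 Y2 Z1 Z2 : ℝ) (ha : a1^2+a2^2=r) (hb : b1^2+b2^2=r)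
    (hc : c1^2+c2^2=r)
    (e1 : h1 = a1+b1+c1) (e2 : h2 = a2+b2+c2)
    (hX1 : X1 = -(h1*(b1*c1-b2*c2)+h2*(b1*c2+b2*c1)))
    (hX2 : X2 = -(h1*(b1*c2+b2*c1)-h2*(b1*c1-b2*c2)))
    (hY1 : Y1 = -(h1*(c1*a1-c2*a2)+h2*(c1*a2+c2*a1)))
    (hY2 : Y2 = -(h1*(c1*a2+c2*a1)-h2*(c1*a1-c2*a2)))
    (hZ1 : Z1 = -(h1*(a1*b1-a2*b2)+h2*(a1*b2+a2*b1)))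
    (hZ2 : Z2 = -(h1*(a1*b2+a2*b1)-h2*(a1*b1-a2*b2))) :
    (r*(h1^2+h2^2)*h1 + (2*(b1*c1+b2*c2)+r)*(X1+Y1+Z1))*(Z1-Y1) +
    (r*(h1^2+h2^2)*h2 + (2*(b1*c1+b2*c2)+r)*(X2+Y2+Z2))*(Z2-Y2) = 0 ∧
    ((2*(b1*c1+b2*c2)+r)*(X1+Y1+Z1) - r*(h1^2+h2^2)*h1 - 2*(h1^2+h2^2)*Y1)*(Z2-Y2) -
    ((2*(b1*c1+b2*c2)+r)*(X2+Y2+Z2) - r*(h1^2+h2^2)*h2 - 2*(h1^2+h2^2)*Y2)*(Z1-Y1) = 0 := by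
  obtain ⟨p, q⟩ := polyS a1 a2 b1 b2 c1 c2 r h1 h2 _ _ _ _ ha hb hc e1 e2 rfl rfl rfl rfl
  subst hX1 hX2 hY1 hY2 hZ1 hZ2
  constructor
  · linear_combination (-(h1^2+h2^2)) * p
  · linear_combination (-(h1^2+h2^2)) * q

theorem rad (b1 b2 c1 c2 r h1 h2 x1 x2 : ℝ) (hr : r ≠ 0) (hb : b1^2+b2^2=r)
    (hc : c1^2+c2^2=r)
    (hX1 : 2*r*x1 = -(h1*(b1*c1-b2*c2)+h2*(b1*c2+b2*c1)))
    (hX2 : 2*r*x2 = -(h1*(b1*c2+b2*c1)-h2*(b1*c1-b2*c2))) :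
    x1^2+x2^2 = (h1^2+h2^2)/4 := by
  have e : (2*r*x1)^2+(2*r*x2)^2 = (h1^2+h2^2)*((b1^2+b2^2)*(c1^2+c2^2)) := by
    rw [hX1, hX2]; ring
  rw [hb, hc] at e
  apply mul_left_cancel₀ (pow_ne_zero 2 hr)
  linear_combination e/4


theorem line_coord (P X Y : Pt) (h : P ∈ affineSpan ℝ {X, Y}) :
    (P 0 - X 0)*(Y 1 - X 1) - (P 1 - X 1)*(Y 0 - X 0) = 0 := by
  obtain ⟨t, rfl⟩ := mem_affineSpan_pair_iff_exists_lineMap_eq.1 h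
  simp [AffineMap.lineMap_apply]
  ring

theorem pedal_coord (O X Y : Pt) :
    (pedal O X Y 0 - X 0)*(Y 1 - X 1) - (pedal O X Y 1 - X 1)*(Y 0 - X 0) = 0 ∧
    (pedal O X Y 0 - O 0)*(Y 0 - X 0) + (pedal O X Y 1 - O 1)*(Y 1 - X 1) = 0 := by
  refine ⟨line_coord _ _ _ (orthogonalProjection_mem _), ?_⟩
  have h := orthogonalProjection_vsub_mem_direction_orthogonal (affineSpan ℝ {X, Y}) O
  have h2 : Y -ᵥ X ∈ (affineSpan ℝ {X, Y}).direction :=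
    AffineSubspace.vsub_mem_direction (right_mem_affineSpan_pair ℝ X Y)
      (left_mem_affineSpan_pair ℝ X Y)
  have h3 := Submodule.inner_right_of_mem_orthogonal h2 h
  simp [PiLp.inner_apply, Fin.sum_univ_two] at h3
  unfold pedal
  linarith

theorem lineReflect_eq (X Y P : Pt) (i : Fin 2) :
    lineReflect X Y P i = 2 * pedal P X Y i - P i := by
  unfold lineReflect pedal
  rw [EuclideanGeometry.reflection_apply']
  simp
  ring

theorem pt_ext (P Q : Pt) (h0 : P 0 = Q 0) (h1 : P 1 = Q 1) : P = Q := by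
  ext i; fin_cases i <;> assumption

theorem circ_coord (A B C : Pt) (h : AffineIndependent ℝ ![A, B, C]) :
    ∃ r : ℝ, ∀ P ∈ ({A, B, C} : Set Pt),
      (P 0 - circumcenter3 A B C h 0)^2 + (P 1 - circumcenter3 A B C h 1)^2 = r := by
  refine ⟨(circumradius3 A B C h)^2, ?_⟩
  have key : ∀ i, (![A, B, C] i 0 - circumcenter3 A B C h 0)^2 +
      (![A, B, C] i 1 - circumcenter3 A B C h 1)^2 = (circumradius3 A B C h)^2 := by
    intro i
    have := (⟨![A, B, C], h⟩ : Affine.Triangle ℝ Pt).dist_circumcenter_eq_circumradius i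
    unfold circumradius3 circumcenter3
    rw [← this, EuclideanSpace.dist_eq, Real.sq_sqrt (by positivity)]
    simp [Fin.sum_univ_two, Real.dist_eq, sq_abs]
  rintro P (rfl | rfl | rfl)
  · exact key 0
  · exact key 1
  · exact key 2

theorem ortho_coord (A B C : Pt) (h : AffineIndependent ℝ ![A, B, C]) (i : Fin 2) :
    orthocenter3 A B C h i = A i + B i + C i - 2 * circumcenter3 A B C h i := by
  have := congrArg (fun v : Pt => v i) (Affine.Triangle.orthocenter_vsub_circumcenter_eq_sum_vsub
    (⟨![A, B, C], h⟩ : Affine.Triangle ℝ Pt))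
  simp [Fin.sum_univ_three] at this
  unfold orthocenter3 circumcenter3
  linarith

theorem circ_unique (A B C M : Pt) (h : AffineIndependent ℝ ![A, B, C]) (r : ℝ)
    (hA : (A 0 - M 0)^2 + (A 1 - M 1)^2 = r) (hB : (B 0 - M 0)^2 + (B 1 - M 1)^2 = r)
    (hC : (C 0 - M 0)^2 + (C 1 - M 1)^2 = r) : M = circumcenter3 A B C h := by
  have ht : affineSpan ℝ (Set.range ![A, B, C]) = ⊤ := by
    apply h.affineSpan_eq_top_iff_card_eq_finrank_add_one.2
    simp
  apply Affine.Simplex.eq_circumcenter_of_dist_eq (r := √r)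
  · simp only [ht]; trivial
  · intro i
    rw [EuclideanSpace.dist_eq]
    fin_cases i <;> simp [Fin.sum_univ_two, Real.dist_eq, sq_abs, hA, hB, hC]

theorem vert (A B C O H As : Pt) (r : ℝ)
    (ha : (A 0 - O 0)^2 + (A 1 - O 1)^2 = r) (hb : (B 0 - O 0)^2 + (B 1 - O 1)^2 = r)
    (hc : (C 0 - O 0)^2 + (C 1 - O 1)^2 = r)
    (hH : ∀ i, H i = A i + B i + C i - 2 * O i) (hHA : H ≠ A) (hAs : As = pedal O A H) :
    2*r*(As 0 - (O 0 + H 0)/2) = -((H 0 - O 0)*((B 0 - O 0)*(C 0 - O 0)-(B 1 - O 1)*(C 1 - O 1))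
      + (H 1 - O 1)*((B 0 - O 0)*(C 1 - O 1)+(B 1 - O 1)*(C 0 - O 0))) ∧
    2*r*(As 1 - (O 1 + H 1)/2) = -((H 0 - O 0)*((B 0 - O 0)*(C 1 - O 1)+(B 1 - O 1)*(C 0 - O 0))
      - (H 1 - O 1)*((B 0 - O 0)*(C 0 - O 0)-(B 1 - O 1)*(C 1 - O 1))) := by
  obtain ⟨h1, h2⟩ := pedal_coord O A H
  rw [← hAs] at h1 h2
  have := ped _ _ _ _ _ _ r (As 0 - O 0) (As 1 - O 1) ha hb hc (by
    rintro ⟨e0, e1⟩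
    apply hHA
    apply pt_ext <;> rw [hH] <;> linarith) (by rw [hH 0, hH 1] at h2; linear_combination h2)
      (by rw [hH 0, hH 1] at h1; linear_combination h1)
  rw [hH 0, hH 1]
  obtain ⟨p, q⟩ := this
  constructor
  · linear_combination p + (C 0 - O 0) * hb + (B 0 - O 0) * hc
  · linear_combination q + (C 1 - O 1) * hb + (B 1 - O 1) * hc

theorem sq_zero (x y : ℝ) (h : x^2+y^2=0) : x = 0 ∧ y = 0 := by
  constructor <;> nlinarith [sq_nonneg x, sq_nonneg y]

set_option maxHeartbeats 2000000 in
theorem refl_collinear (A B C O H As Bs Cs Ns Hs : Pt) (r : ℝ) (hr : r ≠ 0)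
    (ha : (A 0 - O 0)^2 + (A 1 - O 1)^2 = r) (hb : (B 0 - O 0)^2 + (B 1 - O 1)^2 = r)
    (hc : (C 0 - O 0)^2 + (C 1 - O 1)^2 = r)
    (hH : ∀ i, H i = A i + B i + C i - 2 * O i)
    (hHA : H ≠ A) (hHB : H ≠ B) (hHC : H ≠ C)
    (hAs : As = pedal O A H) (hBs : Bs = pedal O B H) (hCs : Cs = pedal O C H)
    (hne : Bs ≠ Cs) (hNs : ∀ i, Ns i = (O i + H i)/2)
    (hHs : ∀ i, Hs i = As i + Bs i + Cs i - 2 * Ns i) :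
    Collinear ℝ ({lineReflect Bs Cs O, Ns, Hs} : Set Pt) := by
  obtain ⟨hx1, hx2⟩ := vert A B C O H As r ha hb hc hH hHA hAs
  obtain ⟨hy1, hy2⟩ := vert B C A O H Bs r hb hc ha (fun i => by rw [hH]; ring) hHB hBs
  obtain ⟨hz1, hz2⟩ := vert C A B O H Cs r hc ha hb (fun i => by rw [hH]; ring) hHC hCs
  obtain ⟨p, q⟩ := poly _ _ _ _ _ _ r (H 0 - O 0) (H 1 - O 1) _ _ _ _ _ _ ha hb hc
    (by rw [hH]; ring) (by rw [hH]; ring) hx1 hx2 hy1 hy2 hz1 hz2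
  obtain ⟨h1, h2⟩ := pedal_coord O Bs Cs
  have hh : (H 0 - O 0)^2 + (H 1 - O 1)^2 ≠ 0 := by
    intro h
    obtain ⟨e0, e1⟩ := sq_zero _ _ h
    have e : H = O := pt_ext _ _ (by linarith) (by linarith)
    apply hne
    have hX : ∀ X, pedal O X H = O := by
      intro X
      unfold pedal
      rw [EuclideanGeometry.orthogonalProjection_eq_self_iff, ← e]
      exact right_mem_affineSpan_pair ℝ X H
    rw [hBs, hCs, hX, hX]
  set F := pedal O Bs Cs with hF
  set D := (H 0 - O 0)^2 + (H 1 - O 1)^2 with hD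
  set K := 2*((B 0 - O 0)*(C 0 - O 0)+(B 1 - O 1)*(C 1 - O 1))+r with hK
  have hrD : 4*r^2*D ≠ 0 := by positivity
  have hu := uniq2
    (D*(2*F 0 - O 0 - Ns 0) - K*(Hs 0 - Ns 0)) (D*(2*F 1 - O 1 - Ns 1) - K*(Hs 1 - Ns 1))
    (Cs 0 - Bs 0) (Cs 1 - Bs 1)
    (by rintro ⟨e0, e1⟩; exact hne (pt_ext _ _ (by linarith) (by linarith)))
    (by
      simp only [hHs, hNs]
      apply mul_left_cancel₀ (pow_ne_zero 2 (mul_ne_zero two_ne_zero hr))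
      linear_combination 8*r^2*D*h2 - p)
    (by
      simp only [hHs, hNs]
      apply mul_left_cancel₀ (pow_ne_zero 2 (mul_ne_zero two_ne_zero hr))
      linear_combination 8*r^2*D*h1 - q)
  apply (collinear_iff_of_mem (p₀ := Ns) (by simp)).2
  refine ⟨Hs -ᵥ Ns, ?_⟩
  rintro P (rfl | rfl | rfl)
  · refine ⟨K/D, ?_⟩
    apply pt_ext <;> simp only [lineReflect_eq, ← hF] <;> simp <;> field_simp
    · linear_combination hu.1
    · linear_combination hu.2
  · exact ⟨0, by simp⟩
  · exact ⟨1, by simp⟩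

theorem stmt8 (A B C O H As Bs Cs Ns Hs : Pt)
    (hABC : AffineIndependent ℝ ![A, B, C])
    (hO : O = circumcenter3 A B C hABC)
    (hH : H = orthocenter3 A B C hABC)
    (hHA : H ≠ A) (hHB : H ≠ B) (hHC : H ≠ C)
    (hAs : As = pedal O A H) (hBs : Bs = pedal O B H) (hCs : Cs = pedal O C H)
    (hind : AffineIndependent ℝ ![As, Bs, Cs])
    (hNs : Ns = circumcenter3 As Bs Cs hind)
    (hHs : Hs = orthocenter3 As Bs Cs hind) :
    Collinear ℝ ({lineReflect Bs Cs O, Ns, Hs} : Set Pt) ∧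
    Collinear ℝ ({lineReflect Cs As O, Ns, Hs} : Set Pt) ∧
    Collinear ℝ ({lineReflect As Bs O, Ns, Hs} : Set Pt) := by
  subst hO hH
  obtain ⟨r, hcirc⟩ := circ_coord A B C hABC
  have ho := ortho_coord A B C hABC
  set O := circumcenter3 A B C hABC
  set H := orthocenter3 A B C hABC
  have ha := hcirc A (by simp)
  have hb := hcirc B (by simp)
  have hc := hcirc C (by simp)
  have hr : r ≠ 0 := by
    rintro rfl
    have key : ∀ P ∈ ({A, B, C} : Set Pt), P = O := by
      intro P hP
      have := hcirc P hP
      apply pt_ext <;> nlinarith [sq_nonneg (P 0 - O 0), sq_nonneg (P 1 - O 1)]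
    have h01 := hABC.injective.ne (show (0 : Fin 3) ≠ 1 by decide)
    apply h01
    simp [key A (by simp), key B (by simp)]
  obtain ⟨hx1, hx2⟩ := vert A B C O H As r ha hb hc ho hHA hAs
  obtain ⟨hy1, hy2⟩ := vert B C A O H Bs r hb hc ha (fun i => by rw [ho]; ring) hHB hBs
  obtain ⟨hz1, hz2⟩ := vert C A B O H Cs r hc ha hb (fun i => by rw [ho]; ring) hHC hCs
  have hN : ∀ i, Ns i = (O i + H i)/2 := by
    have := circ_unique As Bs Cs (WithLp.toLp 2 fun i => (O i + H i)/2) hind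
      (((H 0 - O 0)^2 + (H 1 - O 1)^2)/4)
      (rad _ _ _ _ _ _ _ _ _ hr hb hc hx1 hx2) (rad _ _ _ _ _ _ _ _ _ hr hc ha hy1 hy2)
      (rad _ _ _ _ _ _ _ _ _ hr ha hb hz1 hz2)
    intro i
    rw [hNs, ← this]
  have hHs' : ∀ i, Hs i = As i + Bs i + Cs i - 2 * Ns i := by
    intro i; rw [hHs, hNs, ortho_coord]
  have n01 : As ≠ Bs := hind.injective.ne (show (0 : Fin 3) ≠ 1 by decide)
  have n12 : Bs ≠ Cs := hind.injective.ne (show (1 : Fin 3) ≠ 2 by decide)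
  have n20 : Cs ≠ As := hind.injective.ne (show (2 : Fin 3) ≠ 0 by decide)
  refine ⟨?_, ?_, ?_⟩
  · exact refl_collinear A B C O H As Bs Cs Ns Hs r hr ha hb hc ho hHA hHB hHC hAs hBs hCs n12 hN hHs'
  · exact refl_collinear B C A O H Bs Cs As Ns Hs r hr hb hc ha (fun i => by rw [ho]; ring)
      hHB hHC hHA hBs hCs hAs n20 hN (fun i => by rw [hHs']; ring)
  · exact refl_collinear C A B O H Cs As Bs Ns Hs r hr hc ha hb (fun i => by rw [ho]; ring)
      hHC hHA hHB hCs hAs hBs n01 hN (fun i => by rw [hHs']; ring)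


end
end

section
/- Let ABC be a triangle with side lengths a = dist(B,C), b = dist(C,A), c = dist(A,B) and semiperimeter s = (a+b+c)/2. Let A₀ be the point between B and C with dist(B,A₀) = s − c, B₀ the point between C and A with dist(C,B₀) = s − a, and C₀ the point between A and B with dist(A,C₀) = s − b (the touch points of the excircles with the sides). For x > 0 let A1, B1, C1 lie on the rays from A₀ through C, from B₀ through A, from C₀ through B respectively, and let A2, B2, C2 lie on the rays from A₀ through B, from B₀ through C, from C₀ through A respectively, with dist(A₀,A1) = dist(A₀,A2) = dist(B₀,B1) = dist(B₀,B2) = dist(C₀,C1) = dist(C₀,C2) = x. Assume A1B1C1 and A2B2C2 are affinely independent with circumcenters O1, O2 and circumradii r1, r2. Then each of the incenter I of ABC, the centroid G of ABC, and the Nagel point N of ABC has equal power with respect to the two circumcircles: dist(X,O1)² − r1² = dist(X,O2)² − r2² for X ∈ {I, G, N}. Hence the radical axis of the circumcircles of A1B1C1 and A2B2C2 passes through the Nagel point, centroid and incenter of ABC. -/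
open EuclideanGeometry

noncomputable section

lemma strict_tri (A B C : Pt) (h : AffineIndependent ℝ ![A, B, C]) :
    dist A C < dist A B + dist B C := by
  rcases lt_or_eq_of_le (dist_triangle A B C) with h' | h'
  · exact h'
  · exfalso
    have hw : Wbtw ℝ A B C := dist_add_dist_eq_iff.mp h'.symm
    exact (affineIndependent_iff_not_collinear_set.mp h) hw.collinear

lemma dist_sq_two (P Q : Pt) : dist P Q ^ 2 = (P 0 - Q 0) ^ 2 + (P 1 - Q 1) ^ 2 := by
  rw [EuclideanSpace.dist_eq, Real.sq_sqrt (by positivity), Fin.sum_univ_two, Real.dist_eq,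
    Real.dist_eq, sq_abs, sq_abs]

lemma point_lemma (B C A₀ P : Pt) (a r q x : ℝ) (ha : a = dist B C) (hrq : r + q = a)
    (hr : 0 < r) (hq : 0 < q) (hw : Wbtw ℝ B A₀ C) (hd : dist B A₀ = r)
    (hP : SameRay ℝ (C -ᵥ A₀) (P -ᵥ A₀)) (hdP : dist A₀ P = x) (O : Pt) (ρ : ℝ)
    (hO : dist P O = ρ) :
    (q - x) * (dist B O ^ 2 - ρ ^ 2) + (r + x) * (dist C O ^ 2 - ρ ^ 2)
      = a * (r + x) * (q - x) := by
  have hapos : 0 < a := by linarith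
  obtain ⟨k, ⟨hk0, hk1⟩, rfl⟩ := hw
  have hk : k * a = r := by
    rw [← hd, dist_left_lineMap, Real.norm_of_nonneg hk0, ha]
  have hdC : dist (AffineMap.lineMap B C k) C = q := by
    rw [dist_lineMap_right, Real.norm_of_nonneg (by linarith), ← ha]
    linarith
  have e := sameRay_iff_norm_smul_eq.mp hP
  rw [← dist_eq_norm_vsub, ← dist_eq_norm_vsub, dist_comm C, dist_comm P, hdC, hdP] at e
  have e0 := congrArg (fun v : Pt => v 0) e
  have e1 := congrArg (fun v : Pt => v 1) e
  simp [AffineMap.lineMap_apply] at e0 e1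
  have hq' : q = (1 - k) * a := by linarith
  have key : ∀ i, (1 - k) * (a * P i) = (1 - k) * ((q - x) * B i + (r + x) * C i) := by
    intro i
    fin_cases i
    · simp only [Fin.zero_eta]
      subst hq'; rw [← hk]; linear_combination e0
    · simp only [Fin.mk_one]
      subst hq'; rw [← hk]; linear_combination e1
  have h1k : (1 - k) ≠ 0 := by
    intro h; rw [h] at hq'; linarith
  have key0 := mul_left_cancel₀ h1k (key 0)
  have key1 := mul_left_cancel₀ h1k (key 1)
  have hA := dist_sq_two B C
  rw [← ha] at hA
  have hB := dist_sq_two P O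
  rw [hO] at hB
  rw [dist_sq_two B O, dist_sq_two C O]
  have hP0 : P 0 = ((q - x) * B 0 + (r + x) * C 0) / a := by
    field_simp; linarith
  have hP1 : P 1 = ((q - x) * B 1 + (r + x) * C 1) / a := by
    field_simp; linarith
  rw [hP0, hP1] at hB
  rw [hB]
  have hq2 : q = a - r := by linarith
  subst hq2
  field_simp
  linear_combination (-a * (r + x) * (a - r - x)) * hA

lemma aff_lemma (A B C O1 O2 X : Pt) (r1 r2 α β γ : ℝ) (h : α + β + γ = 1)
    (hX : X = α • A + β • B + γ • C)
    (h0 : α * ((dist A O1 ^ 2 - r1 ^ 2) - (dist A O2 ^ 2 - r2 ^ 2))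
      + β * ((dist B O1 ^ 2 - r1 ^ 2) - (dist B O2 ^ 2 - r2 ^ 2))
      + γ * ((dist C O1 ^ 2 - r1 ^ 2) - (dist C O2 ^ 2 - r2 ^ 2)) = 0) :
    dist X O1 ^ 2 - r1 ^ 2 = dist X O2 ^ 2 - r2 ^ 2 := by
  subst hX
  have hα : α = 1 - β - γ := by linarith
  subst hα
  simp only [dist_sq_two] at h0 ⊢
  simp only [PiLp.add_apply, PiLp.smul_apply, smul_eq_mul]
  linear_combination h0

lemma alg_sum (p q r x u v w u' v' w' : ℝ) (hp : 0 < p) (hq : 0 < q) (hr : 0 < r)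
    (E1 : (q - x) * v + (r + x) * w = (q + r) * (r + x) * (q - x))
    (E2 : (r - x) * w + (p + x) * u = (r + p) * (p + x) * (r - x))
    (E3 : (p - x) * u + (q + x) * v = (p + q) * (q + x) * (p - x))
    (F1 : (r - x) * w' + (q + x) * v' = (q + r) * (q + x) * (r - x))
    (F2 : (p - x) * u' + (r + x) * w' = (r + p) * (r + x) * (p - x))
    (F3 : (q - x) * v' + (p + x) * u' = (p + q) * (p + x) * (q - x)) :
    (u - u') + (v - v') + (w - w') = 0 := by
  have hD : 0 < 2 * (p * q * r) + 2 * x ^ 2 * (p + q + r) := by positivity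
  apply mul_left_cancel₀ hD.ne'
  linear_combination ((p+x)*(q+x) + (r-x)*(p-x) - (r-x)*(q+x)) * E1
    + ((q-x)*(p-x)+(r+x)*(q+x)-(r+x)*(p-x)) * E2
    + ((q-x)*(r-x)-(q-x)*(p+x)+(r+x)*(p+x)) * E3
    - ((p-x)*(q-x) + (r+x)*(p+x) - (r+x)*(q-x)) * F1
    - ((q+x)*(p+x)+(r-x)*(q-x)-(r-x)*(p+x)) * F2
    - ((q+x)*(r+x)-(q+x)*(p-x)+(r-x)*(p-x)) * F3

lemma circ3 (A B C : Pt) (h : AffineIndependent ℝ ![A, B, C]) :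
    dist A (circumcenter3 A B C h) = circumradius3 A B C h ∧
    dist B (circumcenter3 A B C h) = circumradius3 A B C h ∧
    dist C (circumcenter3 A B C h) = circumradius3 A B C h :=
  ⟨(⟨![A, B, C], h⟩ : Affine.Triangle ℝ Pt).dist_circumcenter_eq_circumradius 0,
   (⟨![A, B, C], h⟩ : Affine.Triangle ℝ Pt).dist_circumcenter_eq_circumradius 1,
   (⟨![A, B, C], h⟩ : Affine.Triangle ℝ Pt).dist_circumcenter_eq_circumradius 2⟩

lemma other_dist (B C P : Pt) (h : Wbtw ℝ B P C) : dist C P = dist B C - dist B P := by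
  have := dist_add_dist_eq_iff.mpr h
  rw [dist_comm C P]; linarith

theorem stmt12 (A B C A₀ B₀ C₀ A1 A2 B1 B2 C1 C2 O1 O2 : Pt) (a b c s x r1 r2 : ℝ)
    (hABC : AffineIndependent ℝ ![A, B, C])
    (ha : a = dist B C) (hb : b = dist C A) (hc : c = dist A B)
    (hs : s = (a + b + c) / 2)
    (hA₀w : Wbtw ℝ B A₀ C) (hA₀d : dist B A₀ = s - c)
    (hB₀w : Wbtw ℝ C B₀ A) (hB₀d : dist C B₀ = s - a)
    (hC₀w : Wbtw ℝ A C₀ B) (hC₀d : dist A C₀ = s - b)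
    (hx : 0 < x)
    (hA1 : SameRay ℝ (C -ᵥ A₀) (A1 -ᵥ A₀))
    (hB1 : SameRay ℝ (A -ᵥ B₀) (B1 -ᵥ B₀))
    (hC1 : SameRay ℝ (B -ᵥ C₀) (C1 -ᵥ C₀))
    (hA2 : SameRay ℝ (B -ᵥ A₀) (A2 -ᵥ A₀))
    (hB2 : SameRay ℝ (C -ᵥ B₀) (B2 -ᵥ B₀))
    (hC2 : SameRay ℝ (A -ᵥ C₀) (C2 -ᵥ C₀))
    (hdA1 : dist A₀ A1 = x) (hdA2 : dist A₀ A2 = x)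
    (hdB1 : dist B₀ B1 = x) (hdB2 : dist B₀ B2 = x)
    (hdC1 : dist C₀ C1 = x) (hdC2 : dist C₀ C2 = x)
    (h1 : AffineIndependent ℝ ![A1, B1, C1])
    (h2 : AffineIndependent ℝ ![A2, B2, C2])
    (hO1 : O1 = circumcenter3 A1 B1 C1 h1) (hr1 : r1 = circumradius3 A1 B1 C1 h1)
    (hO2 : O2 = circumcenter3 A2 B2 C2 h2) (hr2 : r2 = circumradius3 A2 B2 C2 h2) :
    (dist (incenter3 A B C) O1 ^ 2 - r1 ^ 2 = dist (incenter3 A B C) O2 ^ 2 - r2 ^ 2) ∧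
    (dist (centroid3 A B C) O1 ^ 2 - r1 ^ 2 = dist (centroid3 A B C) O2 ^ 2 - r2 ^ 2) ∧
    (dist (nagelPoint A B C) O1 ^ 2 - r1 ^ 2 = dist (nagelPoint A B C) O2 ^ 2 - r2 ^ 2) := by
  obtain ⟨c1, c2, c3⟩ := circ3 A1 B1 C1 h1
  obtain ⟨d1, d2, d3⟩ := circ3 A2 B2 C2 h2
  rw [← hO1, ← hr1] at c1 c2 c3
  rw [← hO2, ← hr2] at d1 d2 d3
  have hp : 0 < s - a := by
    have := strict_tri B A C (hABC.comm_left)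
    rw [dist_comm B A, dist_comm A C, ← ha, ← hb, ← hc] at this
    linarith
  have hq : 0 < s - b := by
    have := strict_tri A B C hABC
    rw [dist_comm A C, ← ha, ← hb, ← hc] at this
    linarith
  have hr : 0 < s - c := by
    have := strict_tri A C B (hABC.comm_right)
    rw [dist_comm A C, dist_comm C B, ← ha, ← hb, ← hc] at this
    linarith
  have hA' : dist C A₀ = s - b := by rw [other_dist B C A₀ hA₀w]; linarith
  have hB' : dist A B₀ = s - c := by rw [other_dist C A B₀ hB₀w]; linarith
  have hC' : dist B C₀ = s - a := by rw [other_dist A B C₀ hC₀w]; linarith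
  have E1 := point_lemma B C A₀ A1 a (s - c) (s - b) x ha (by linarith) hr hq hA₀w hA₀d hA1 hdA1
    O1 r1 c1
  have E2 := point_lemma C A B₀ B1 b (s - a) (s - c) x hb (by linarith) hp hr hB₀w hB₀d hB1 hdB1
    O1 r1 c2
  have E3 := point_lemma A B C₀ C1 c (s - b) (s - a) x hc (by linarith) hq hp hC₀w hC₀d hC1 hdC1
    O1 r1 c3
  have F1 := point_lemma C B A₀ A2 a (s - b) (s - c) x (by rw [ha, dist_comm]) (by linarith)
    hq hr hA₀w.symm hA' hA2 hdA2 O2 r2 d1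
  have F2 := point_lemma A C B₀ B2 b (s - c) (s - a) x (by rw [hb, dist_comm]) (by linarith)
    hr hp hB₀w.symm hB' hB2 hdB2 O2 r2 d2
  have F3 := point_lemma B A C₀ C2 c (s - a) (s - b) x (by rw [hc, dist_comm]) (by linarith)
    hp hq hC₀w.symm hC' hC2 hdC2 O2 r2 d3
  have ea : a = (s - b) + (s - c) := by linarith
  have eb : b = (s - c) + (s - a) := by linarith
  have ec : c = (s - a) + (s - b) := by linarith
  have hs0 : 0 < s := by linarith
  unfold incenter3 centroid3 nagelPoint
  rw [← ha, ← hb, ← hc, ← hs, show a + b + c = 2 * s by linarith]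
  clear hO1 hr1 hO2 hr2 c1 c2 c3 d1 d2 d3
  have S1 := alg_sum (s - a) (s - b) (s - c) x _ _ _ _ _ _ hp hq hr
    (E1.trans (by rw [← ea])) (E2.trans (by rw [← eb])) (E3.trans (by rw [← ec]))
    (F1.trans (by rw [← ea])) (F2.trans (by rw [← eb])) (F3.trans (by rw [← ec]))
  generalize hu : dist A O1 ^ 2 - r1 ^ 2 = u at *
  generalize hv : dist B O1 ^ 2 - r1 ^ 2 = v at *
  generalize hw : dist C O1 ^ 2 - r1 ^ 2 = w at *
  generalize hu' : dist A O2 ^ 2 - r2 ^ 2 = u' at *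
  generalize hv' : dist B O2 ^ 2 - r2 ^ 2 = v' at *
  generalize hw' : dist C O2 ^ 2 - r2 ^ 2 = w' at *
  have hss : a = 2 * s - b - c := by linarith
  have S2 : (s - a) * (u - u') + (s - b) * (v - v') + (s - c) * (w - w') = 0 := by
    rw [hss] at E1 E2 E3 F1 F2 F3 ⊢
    linear_combination (E1 + E2 + E3 - F1 - F2 - F3) / 2
  refine ⟨?_, ?_, ?_⟩
  · apply aff_lemma A B C O1 O2 _ r1 r2 (a / (2 * s)) (b / (2 * s)) (c / (2 * s))
    · field_simp; linarith
    · simp only [smul_add, smul_smul, div_eq_inv_mul]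
    · rw [hu, hv, hw, hu', hv', hw']
      field_simp
      linear_combination s * S1 - S2
  · apply aff_lemma A B C O1 O2 _ r1 r2 (3⁻¹) (3⁻¹) (3⁻¹)
    · norm_num
    · simp only [smul_add]
    · rw [hu, hv, hw, hu', hv', hw']
      linear_combination S1 / 3
  · apply aff_lemma A B C O1 O2 _ r1 r2 ((s - a) / s) ((s - b) / s) ((s - c) / s)
    · field_simp; linarith
    · rfl
    · rw [hu, hv, hw, hu', hv', hw']
      field_simp
      linear_combination S2


end
end

section
/- Let ABC be a triangle with incenter I and circumcenter O, and let Be be the Bevan point of ABC, i.e., the point reflection of I across O. Let A₀, B₀, C₀ be the pedals of Be on lines BC, CA, AB, and assume A₀, B₀, C₀ are affinely independent with circumcenter O₀. Let A', B', C' be the pedals of Be on lines AI, BI, CI, and assume A', B', C' are affinely independent with orthocenter H'. Then Be, H' and O₀ are collinear. -/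
open EuclideanGeometry

noncomputable section

theorem circ_eq {A B C Q : Pt} (h : AffineIndependent ℝ ![A, B, C])
    (h1 : dist A Q = dist B Q) (h2 : dist A Q = dist C Q) : Q = circumcenter3 A B C h := by
  unfold circumcenter3
  refine Affine.Simplex.eq_circumcenter_of_dist_eq (r := dist A Q) _ ?_ ?_
  · have : affineSpan ℝ (Set.range ![A, B, C]) = ⊤ := by
      rw [h.affineSpan_eq_top_iff_card_eq_finrank_add_one]
      simp
    change Q ∈ affineSpan ℝ (Set.range ![A, B, C])
    rw [this]
    trivial
  · intro i
    fin_cases i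
    · rfl
    · exact h1.symm
    · exact h2.symm

theorem orth_eq {A B C Q : Pt} (h : AffineIndependent ℝ ![A, B, C])
    (hQ : Q = circumcenter3 A B C h) : orthocenter3 A B C h = A + B + C - (2 : ℝ) • Q := by
  have := Affine.Triangle.orthocenter_vsub_circumcenter_eq_sum_vsub
    (⟨![A, B, C], h⟩ : Affine.Triangle ℝ Pt)
  unfold circumcenter3 at hQ
  unfold orthocenter3
  rw [← hQ] at this
  replace this : Affine.Triangle.orthocenter (⟨![A, B, C], h⟩ : Affine.Triangle ℝ Pt) -ᵥ Q =
    ∑ i : Fin 3, (![A, B, C] i -ᵥ Q) := this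
  simp only [Fin.sum_univ_three, vsub_eq_sub, Matrix.cons_val] at this
  rw [sub_eq_iff_eq_add.mp this]
  module

theorem pedal_eq_s15 {P X Y Q : Pt} (t : ℝ) (hQ : Q = X + t • (Y - X))
    (h : inner ℝ (P - Q) (Y - X) = 0) : pedal P X Y = Q := by
  unfold pedal
  rw [EuclideanGeometry.coe_orthogonalProjection_eq_iff_mem]
  constructor
  · rw [hQ, add_comm]
    exact AffineMap.lineMap_mem_affineSpan_pair t X Y
  · rw [direction_affineSpan, vectorSpan_pair_rev, Submodule.mem_orthogonal_singleton_iff_inner_left]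
    exact h

theorem tri_pos {A B C : Pt} (h : AffineIndependent ℝ ![A, B, C]) :
    dist A C < dist A B + dist B C := by
  refine lt_of_le_of_ne (dist_triangle _ _ _) fun he => ?_
  rw [affineIndependent_iff_not_collinear_set] at h
  exact h (dist_add_dist_eq_iff.mp he.symm).collinear

/-- The point with affine coordinates `α, β` in the frame `A, B, C`. -/
def fr (A B C : Pt) (α β : ℝ) : Pt := A + α • (B - A) + β • (C - A)

theorem fr_inner {A B C : Pt} {x y z : ℝ} (ha : dist B C = y + z) (hb : dist C A = z + x)
    (hc : dist A B = x + y) (α β γ δ α' β' γ' δ' : ℝ) :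
    inner ℝ (fr A B C α β - fr A B C γ δ) (fr A B C α' β' - fr A B C γ' δ') =
      (α - γ) * (α' - γ') * (x + y) ^ 2
      + ((α - γ) * (β' - δ') + (β - δ) * (α' - γ')) * (x ^ 2 + x * y + x * z - y * z)
      + (β - δ) * (β' - δ') * (z + x) ^ 2 := by
  have e : ∀ α β γ δ : ℝ, fr A B C α β - fr A B C γ δ =
      (α - γ) • (B - A) + (β - δ) • (C - A) := by
    intros; unfold fr; module
  have hp : inner ℝ (B - A) (B - A) = (x + y) ^ 2 := by
    rw [real_inner_self_eq_norm_sq, ← dist_eq_norm, dist_comm, hc]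
  have hq : inner ℝ (C - A) (C - A) = (z + x) ^ 2 := by
    rw [real_inner_self_eq_norm_sq, ← dist_eq_norm, hb]
  have hr : inner ℝ (B - A) (C - A) = x ^ 2 + x * y + x * z - y * z := by
    have h1 : inner ℝ ((B - A) - (C - A)) ((B - A) - (C - A)) = (y + z) ^ 2 := by
      rw [real_inner_self_eq_norm_sq, sub_sub_sub_cancel_right, ← dist_eq_norm, ha]
    rw [real_inner_sub_sub_self, hp, hq] at h1
    linarith
  have hr' : inner ℝ (C - A) (B - A) = x ^ 2 + x * y + x * z - y * z := by
    rw [real_inner_comm, hr]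
  rw [e, e]
  simp only [inner_add_left, inner_add_right, real_inner_smul_left, real_inner_smul_right,
    hp, hq, hr, hr']
  ring

theorem dist_eq_of_inner {P Q R : Pt} (h : inner ℝ (P - R) (P - R) = inner ℝ (Q - R) (Q - R)) :
    dist P R = dist Q R := by
  rw [real_inner_self_eq_norm_sq, real_inner_self_eq_norm_sq] at h
  rw [dist_eq_norm, dist_eq_norm]
  exact (sq_eq_sq₀ (norm_nonneg _) (norm_nonneg _)).mp h

set_option maxHeartbeats 4000000 in
theorem stmt15 (A B C I O Be A₀ B₀ C₀ A' B' C' O₀ H' : Pt)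
    (hABC : AffineIndependent ℝ ![A, B, C])
    (hI : I = incenter3 A B C)
    (hO : O = circumcenter3 A B C hABC)
    (hBe : Be = (2 : ℝ) • O - I)
    (hA₀ : A₀ = pedal Be B C) (hB₀ : B₀ = pedal Be C A) (hC₀ : C₀ = pedal Be A B)
    (h₀ : AffineIndependent ℝ ![A₀, B₀, C₀])
    (hO₀ : O₀ = circumcenter3 A₀ B₀ C₀ h₀)
    (hA' : A' = pedal Be A I) (hB' : B' = pedal Be B I) (hC' : C' = pedal Be C I)
    (hA'B'C' : AffineIndependent ℝ ![A', B', C'])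
    (hH' : H' = orthocenter3 A' B' C' hA'B'C') :
    Collinear ℝ ({Be, H', O₀} : Set Pt) := by
  obtain ⟨x, y, z, ha, hb, hc⟩ : ∃ x y z : ℝ, dist B C = y + z ∧ dist C A = z + x ∧
      dist A B = x + y := by
    refine ⟨(dist C A + dist A B - dist B C) / 2, (dist A B + dist B C - dist C A) / 2,
      (dist B C + dist C A - dist A B) / 2, ?_, ?_, ?_⟩ <;> ring
  have hcol := affineIndependent_iff_not_collinear_set.mp hABC
  have hy : 0 < y := by
    have := tri_pos hABC
    rw [dist_comm A C] at this
    linarith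
  have hx : 0 < x := by
    have h' : AffineIndependent ℝ ![B, A, C] := by
      rw [affineIndependent_iff_not_collinear_set, Set.insert_comm]; exact hcol
    have := tri_pos h'
    rw [dist_comm A C, dist_comm B A] at this
    linarith
  have hz : 0 < z := by
    have h' : AffineIndependent ℝ ![A, C, B] := by
      rw [affineIndependent_iff_not_collinear_set, Set.pair_comm]; exact hcol
    have := tri_pos h'
    rw [dist_comm A C, dist_comm C B] at this
    linarith
  have hs : 0 < x + y + z := by positivity
  have hxy : 0 < x + y := by positivity
  have hyz : 0 < y + z := by positivity
  have hzx : 0 < z + x := by positivity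
  have hx0 := hx.ne'
  have hy0 := hy.ne'
  have hz0 := hz.ne'
  have hs0 := hs.ne'
  have hxy0 := hxy.ne'
  have hyz0 := hyz.ne'
  have hzx0 := hzx.ne'
  have key : ∀ {P Q R S : Pt} {α β γ δ α' β' γ' δ' : ℝ}, P = fr A B C α β → Q = fr A B C γ δ →
      R = fr A B C α' β' → S = fr A B C γ' δ' → inner ℝ (P - Q) (R - S) =
      (α - γ) * (α' - γ') * (x + y) ^ 2
      + ((α - γ) * (β' - δ') + (β - δ) * (α' - γ')) * (x ^ 2 + x * y + x * z - y * z)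
      + (β - δ) * (β' - δ') * (z + x) ^ 2 := by
    intro P Q R S α β γ δ α' β' γ' δ' h1 h2 h3 h4
    rw [h1, h2, h3, h4]
    exact fr_inner ha hb hc _ _ _ _ _ _ _ _
  have lin' : ∀ {P Q : Pt} (t : ℝ) {α β γ δ : ℝ}, P = fr A B C α β → Q = fr A B C γ δ →
      fr A B C (α + t * (γ - α)) (β + t * (δ - β)) = P + t • (Q - P) := by
    intro P Q t α β γ δ h1 h2
    rw [h1, h2]; unfold fr; module
  have ped : ∀ {P X Y : Pt} (t : ℝ) {α β γ δ u v : ℝ}, P = fr A B C u v → X = fr A B C α β →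
      Y = fr A B C γ δ →
      (u - (α + t * (γ - α))) * (γ - α) * (x + y) ^ 2
      + ((u - (α + t * (γ - α))) * (δ - β) + (v - (β + t * (δ - β))) * (γ - α))
        * (x ^ 2 + x * y + x * z - y * z)
      + (v - (β + t * (δ - β))) * (δ - β) * (z + x) ^ 2 = 0 →
      pedal P X Y = fr A B C (α + t * (γ - α)) (β + t * (δ - β)) := by
    intro P X Y t α β γ δ u v hP hX hY h
    refine pedal_eq_s15 t (lin' t hX hY) ?_
    rw [key hP rfl hY hX]
    exact h
  have eA : A = fr A B C 0 0 := by unfold fr; module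
  have eB : B = fr A B C 1 0 := by unfold fr; module
  have eC : C = fr A B C 0 1 := by unfold fr; module
  -- coordinates of incenter and circumcenter
  obtain ⟨i1, hi1⟩ : ∃ i1, i1 = (z + x) / (2 * (x + y + z)) := ⟨_, rfl⟩
  obtain ⟨i2, hi2⟩ : ∃ i2, i2 = (x + y) / (2 * (x + y + z)) := ⟨_, rfl⟩
  obtain ⟨o1, ho1⟩ : ∃ o1, o1 = (z + x) ^ 2 * (y ^ 2 + y * z + y * x - z * x) /
    (8 * x * y * z * (x + y + z)) := ⟨_, rfl⟩
  obtain ⟨o2, ho2⟩ : ∃ o2, o2 = (x + y) ^ 2 * (z ^ 2 + z * x + z * y - x * y) /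
    (8 * x * y * z * (x + y + z)) := ⟨_, rfl⟩
  have eI : I = fr A B C i1 i2 := by
    have hw : (y + z + (z + x) + (x + y))⁻¹ * (y + z) = 1 - i1 - i2 := by
      rw [hi1, hi2]; field_simp; ring
    have hw1 : (y + z + (z + x) + (x + y))⁻¹ * (z + x) = i1 := by
      rw [hi1]; field_simp; ring
    have hw2 : (y + z + (z + x) + (x + y))⁻¹ * (x + y) = i2 := by
      rw [hi2]; field_simp; ring
    rw [hI, incenter3, ha, hb, hc, smul_add, smul_add, smul_smul, smul_smul, smul_smul,
      hw, hw1, hw2]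
    unfold fr; module
  have eO : O = fr A B C o1 o2 := by
    rw [hO]; symm
    apply circ_eq
    · apply dist_eq_of_inner
      rw [key eA rfl eA rfl, key eB rfl eB rfl, ho1, ho2]
      field_simp
      ring
    · apply dist_eq_of_inner
      rw [key eA rfl eA rfl, key eC rfl eC rfl, ho1, ho2]
      field_simp
      ring
  have eBe : Be = fr A B C (2 * o1 - i1) (2 * o2 - i2) := by
    rw [hBe, eO, eI]; unfold fr; module
  -- the pedals on the sides
  have eA₀ : A₀ = fr A B C _ _ := hA₀.trans (ped (z / (y + z)) eBe eB eC (by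
    rw [ho1, ho2, hi1, hi2]; field_simp; ring))
  have eB₀ : B₀ = fr A B C _ _ := hB₀.trans (ped (x / (z + x)) eBe eC eA (by
    rw [ho1, ho2, hi1, hi2]; field_simp; ring))
  have eC₀ : C₀ = fr A B C _ _ := hC₀.trans (ped (y / (x + y)) eBe eA eB (by
    rw [ho1, ho2, hi1, hi2]; field_simp; ring))
  -- the pedals on the bisectors
  have eA' : A' = fr A B C _ _ := hA'.trans (ped ((y + z) / (2 * x)) eBe eA eI (by
    rw [ho1, ho2, hi1, hi2]; field_simp; ring))
  have eB' : B' = fr A B C _ _ := hB'.trans (ped ((z + x) / (2 * y)) eBe eB eI (by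
    rw [ho1, ho2, hi1, hi2]; field_simp; ring))
  have eC' : C' = fr A B C _ _ := hC'.trans (ped ((x + y) / (2 * z)) eBe eC eI (by
    rw [ho1, ho2, hi1, hi2]; field_simp; ring))
  have hOc : O = circumcenter3 A' B' C' hA'B'C' := by
    apply circ_eq
    · apply dist_eq_of_inner
      rw [key eA' eO eA' eO, key eB' eO eB' eO, ho1, ho2, hi1, hi2]
      field_simp
      ring
    · apply dist_eq_of_inner
      rw [key eA' eO eA' eO, key eC' eO eC' eO, ho1, ho2, hi1, hi2]
      field_simp
      ring
  -- the orthocenter of the second pedal triangle, relative to the Bevan point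
  have eH' : H' - Be = (1 - 2 * o1 - i1) • (B - A) + (1 - 2 * o2 - i2) • (C - A) := by
    have hm : ∀ a1 a2 b1 b2 c1 c2 : ℝ,
        fr A B C a1 a2 + fr A B C b1 b2 + fr A B C c1 c2 - (2 : ℝ) • fr A B C o1 o2
          - fr A B C (2 * o1 - i1) (2 * o2 - i2) =
        (a1 + b1 + c1 - 4 * o1 + i1) • (B - A) + (a2 + b2 + c2 - 4 * o2 + i2) • (C - A) := by
      intros; unfold fr; module
    rw [hH', orth_eq hA'B'C' hOc, eA', eB', eC', eO, eBe, hm]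
    congr 2
    · rw [ho1, hi1]; field_simp; ring
    · rw [ho2, hi2]; field_simp; ring
  obtain ⟨t, ht⟩ : ∃ t, t = (x + y) * (y + z) * (z + x) / (4 * x * y * z) := ⟨_, rfl⟩
  have eO₀ : O₀ = fr A B C (2 * o1 - i1 + t * (1 - 2 * o1 - i1))
      (2 * o2 - i2 + t * (1 - 2 * o2 - i2)) := by
    rw [hO₀]; symm
    apply circ_eq
    · apply dist_eq_of_inner
      rw [key eA₀ rfl eA₀ rfl, key eB₀ rfl eB₀ rfl, ho1, ho2, hi1, hi2, ht]
      field_simp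
      ring
    · apply dist_eq_of_inner
      rw [key eA₀ rfl eA₀ rfl, key eC₀ rfl eC₀ rfl, ho1, ho2, hi1, hi2, ht]
      field_simp
      ring
  rw [collinear_iff_of_mem (p₀ := Be) (by simp)]
  refine ⟨H' - Be, ?_⟩
  intro p hp
  simp only [Set.mem_insert_iff, Set.mem_singleton_iff] at hp
  rcases hp with rfl | rfl | rfl
  · exact ⟨0, by simp⟩
  · exact ⟨1, by simp⟩
  · refine ⟨t, ?_⟩
    rw [eH', eO₀, eBe, vadd_eq_add]
    unfold fr
    module

end
end

section
/- Let ABC be a triangle with incenter I and circumcenter O, and let Be be the Bevan point of ABC, i.e., the point reflection of I across O. Let A', B', C' be the pedals of Be on lines AI, BI, CI, and assume A', B', C' are affinely independent. Then the circumcenter of triangle A'B'C' is O, the circumcenter of ABC (equivalently, it is the midpoint of segment I Be). -/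
open EuclideanGeometry

noncomputable section

/-- The pedal of the reflection of `I` in `O` on a line through `I` is as far from `O` as `I`. -/
theorem dist_pedal_eq (X I O : Pt) :
    dist (pedal ((2 : ℝ) • O - I) X I) O = dist I O := by
  have hI : I ∈ affineSpan ℝ ({X, I} : Set Pt) := right_mem_affineSpan_pair ℝ X I
  have h1 := vsub_orthogonalProjection_mem_direction_orthogonal
    (affineSpan ℝ ({X, I} : Set Pt)) ((2 : ℝ) • O - I)
  have h2 : I -ᵥ pedal ((2 : ℝ) • O - I) X I ∈ (affineSpan ℝ ({X, I} : Set Pt)).direction :=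
    AffineSubspace.vsub_mem_direction hI (orthogonalProjection_mem _)
  have h3 := Submodule.inner_left_of_mem_orthogonal h2 h1
  change inner ℝ (((2 : ℝ) • O - I) - pedal ((2 : ℝ) • O - I) X I)
    (I - pedal ((2 : ℝ) • O - I) X I) = 0 at h3
  generalize pedal ((2 : ℝ) • O - I) X I = Y at h3 ⊢
  have e1 : (2 : ℝ) • O - I - Y = (O - Y) + (O - I) := by module
  have e2 : I - Y = (O - Y) - (O - I) := by module
  rw [e1, e2, real_inner_add_sub_eq_zero_iff] at h3
  rw [dist_comm, dist_comm I, dist_eq_norm, dist_eq_norm, h3]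

theorem stmt16 (A B C I O Be A' B' C' : Pt)
    (hABC : AffineIndependent ℝ ![A, B, C])
    (hI : I = incenter3 A B C)
    (hO : O = circumcenter3 A B C hABC)
    (hBe : Be = (2 : ℝ) • O - I)
    (hA' : A' = pedal Be A I) (hB' : B' = pedal Be B I) (hC' : C' = pedal Be C I)
    (hA'B'C' : AffineIndependent ℝ ![A', B', C']) :
    circumcenter3 A' B' C' hA'B'C' = O ∧
    circumcenter3 A' B' C' hA'B'C' = midpoint ℝ I Be := by
  have key : circumcenter3 A' B' C' hA'B'C' = O := by
    symm
    unfold circumcenter3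
    apply Affine.Simplex.eq_circumcenter_of_dist_eq (r := dist I O)
    · have : affineSpan ℝ (Set.range ![A', B', C']) = ⊤ := by
        rw [hA'B'C'.affineSpan_eq_top_iff_card_eq_finrank_add_one]
        simp
      change O ∈ affineSpan ℝ (Set.range ![A', B', C'])
      rw [this]
      exact AffineSubspace.mem_top ℝ Pt O
    · intro i
      change dist (![A', B', C'] i) O = dist I O
      fin_cases i
      · change dist A' O = _
        rw [hA', hBe, dist_pedal_eq]
      · change dist B' O = _
        rw [hB', hBe, dist_pedal_eq]
      · change dist C' O = _
        rw [hC', hBe, dist_pedal_eq]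
  refine ⟨key, ?_⟩
  rw [key, hBe, midpoint_eq_smul_add]
  simp

end
end
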